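/- arXiv:2310.11483 — 7 statements merged into one kernel-verified Lean document; each statement's English description precedes it below -/
import Mathlib

section
/- The operation ⟨A,B⟩^≈ = ⟨B, U − B⟩ on 3^U is a Brouwer complementation: for all a,b ∈ 3^U, (B1) a ⊓ a^≈≈ = a; (B2) (a ⊔ b)^≈ = a^≈ ⊓ b^≈; (B3) a ⊓ a^≈ = 0, where 0 = ⟨∅,U⟩. -/
/-!
Pairs `(A, B)` of subsets of a universe `α` model elements `⟨A,B⟩`;
membership in `3^U` is the disjointness condition `A ∩ B = ∅`.
-/

namespace PBZ

variable {α : Type*}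

/-- Membership in `3^U`: the two components are disjoint. -/
def mem3 (a : Set α × Set α) : Prop := a.1 ∩ a.2 = ∅

/-- `⟨A,B⟩ ⊓ ⟨C,D⟩ = ⟨A ∩ C, B ∪ D⟩`. -/
def meet (a b : Set α × Set α) : Set α × Set α := (a.1 ∩ b.1, a.2 ∪ b.2)

/-- `⟨A,B⟩ ⊔ ⟨C,D⟩ = ⟨A ∪ C, B ∩ D⟩`. -/
def join (a b : Set α × Set α) : Set α × Set α := (a.1 ∪ b.1, a.2 ∩ b.2)

/-- Induced order: `⟨A,B⟩ ≤ ⟨C,D⟩` iff `A ⊆ C` and `D ⊆ B`. -/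
def le (a b : Set α × Set α) : Prop := a.1 ⊆ b.1 ∧ b.2 ⊆ a.2

/-- Kleene complementation `⟨A,B⟩⁻ = ⟨B,A⟩`. -/
def kneg (a : Set α × Set α) : Set α × Set α := (a.2, a.1)

/-- Brouwer complementation `⟨A,B⟩^≈ = ⟨B, U − B⟩`. -/
def bneg (a : Set α × Set α) : Set α × Set α := (a.2, a.2ᶜ)

/-- `0 = ⟨∅, U⟩`. -/
def bot : Set α × Set α := (∅, Set.univ)

/-- `1 = ⟨U, ∅⟩`. -/
def top : Set α × Set α := (Set.univ, ∅)

/-- Equivalence class `[x]_R`. -/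
def cls (r : α → α → Prop) (x : α) : Set α := {y | r x y}

/-- Lower approximation `R̲X = {x : [x]_R ⊆ X}`. -/
def lower (r : α → α → Prop) (X : Set α) : Set α := {x | cls r x ⊆ X}

/-- Upper approximation `R̄X = {x : [x]_R ∩ X ≠ ∅}`. -/
def upper (r : α → α → Prop) (X : Set α) : Set α := {x | (cls r x ∩ X).Nonempty}

/-- Pawlak operator `⟨A,B⟩^L = ⟨R̲A, R̲B⟩`. -/
def pawlak (r : α → α → Prop) (a : Set α × Set α) : Set α × Set α :=
  (lower r a.1, lower r a.2)

end PBZ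

open PBZ

/-- `⟨A,B⟩^≈ = ⟨B, U − B⟩` is a Brouwer complementation on `3^U`:
(B1) `a ⊓ a^≈≈ = a`; (B2) `(a ⊔ b)^≈ = a^≈ ⊓ b^≈`; (B3) `a ⊓ a^≈ = 0`. -/
theorem stmt_2 (α : Type*) :
    (∀ a : Set α × Set α, mem3 a → meet a (bneg (bneg a)) = a) ∧
    (∀ a b : Set α × Set α, mem3 a → mem3 b → bneg (join a b) = meet (bneg a) (bneg b)) ∧
    (∀ a : Set α × Set α, mem3 a → meet a (bneg a) = bot) := by
  refine ⟨?_, ?_, ?_⟩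
  · rintro ⟨A, B⟩ h
    have hd : Disjoint A B := Set.disjoint_iff_inter_eq_empty.mpr h
    have hs : A ⊆ Bᶜ := hd.subset_compl_right
    simp only [meet, bneg, compl_compl, Set.union_self, Set.inter_eq_left.mpr hs]
  · rintro ⟨A, B⟩ ⟨C, D⟩ _ _
    simp only [meet, bneg, join, Set.compl_inter]
  · rintro ⟨A, B⟩ h
    have h' : A ∩ B = ∅ := h
    simp only [meet, bneg, bot, h', Set.union_compl_self]
end

section
/- The Pawlak operator ^L on 3^U satisfies axiom A5: for all a,b ∈ 3^U, if a^≈ = b^≈ then a^L ⊓ b^L = (a ⊓ b)^L. -/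
open PBZ

/-- A5: for all `a, b ∈ 3^U`, if `a^≈ = b^≈` then
`a^L ⊓ b^L = (a ⊓ b)^L`. -/
theorem stmt_7 {α : Type*} (r : α → α → Prop) (hr : Equivalence r) :
    ∀ a b : Set α × Set α, mem3 a → mem3 b → bneg a = bneg b →
      meet (pawlak r a) (pawlak r b) = pawlak r (meet a b) := by
  rintro ⟨A, B⟩ ⟨C, D⟩ _ _ h
  have h2 : B = D := congrArg Prod.fst h
  subst h2
  have h1 : lower r A ∩ lower r C = lower r (A ∩ C) := by
    ext x
    exact Set.subset_inter_iff.symm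
  simp only [meet, pawlak, Set.union_self, h1]
end

section
/- For all disjoint A,B ⊆ U, the seven truth-value parts T(A,B), sT(A,B), Un(A,B), K(A,B), fK(A,B), sF(A,B), F(A,B) are pairwise disjoint and their union is U. -/
/-!
Rough-set approximations and the seven truth-value parts.
`U − B` is the complement `Bᶜ`, and `U − A − B` is `(A ∪ B)ᶜ`.
-/

namespace PBZ

variable {α : Type*}

/-- True part `T(A,B) = R̲A`. -/
def Tpart (r : α → α → Prop) (A _B : Set α) : Set α := lower r A

/-- Sometimes true part `sT(A,B) = R̲(U−B) ∩ R̄A ∩ R̄(U−A−B)`. -/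
def sTpart (r : α → α → Prop) (A B : Set α) : Set α :=
  lower r Bᶜ ∩ upper r A ∩ upper r (A ∪ B)ᶜ

/-- Unknown part `Un(A,B) = R̲(U−A−B)`. -/
def Unpart (r : α → α → Prop) (A B : Set α) : Set α := lower r (A ∪ B)ᶜ

/-- Contradictory part `K(A,B) = R̲(A∪B) ∩ R̄A ∩ R̄B`. -/
def Kpart (r : α → α → Prop) (A B : Set α) : Set α :=
  lower r (A ∪ B) ∩ upper r A ∩ upper r B

/-- Fully contradictory part `fK(A,B) = R̄A ∩ R̄B ∩ R̄(U−A−B)`. -/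
def fKpart (r : α → α → Prop) (A B : Set α) : Set α :=
  upper r A ∩ upper r B ∩ upper r (A ∪ B)ᶜ

/-- Sometimes false part `sF(A,B) = R̲(U−A) ∩ R̄B ∩ R̄(U−A−B)`. -/
def sFpart (r : α → α → Prop) (A B : Set α) : Set α :=
  lower r Aᶜ ∩ upper r B ∩ upper r (A ∪ B)ᶜ

/-- False part `F(A,B) = R̲B`. -/
def Fpart (r : α → α → Prop) (_A B : Set α) : Set α := lower r B

end PBZ

open PBZ

/-- The seven truth-value parts, indexed by `Fin 7`. -/
def sevenParts {α : Type*} (r : α → α → Prop) (A B : Set α) : Fin 7 → Set α :=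
  ![Tpart r A B, sTpart r A B, Unpart r A B, Kpart r A B,
    fKpart r A B, sFpart r A B, Fpart r A B]

theorem parts_aux {α : Type*} (r : α → α → Prop) (hr : Equivalence r)
    (A B : Set α) (hAB : A ∩ B = ∅) (x : α) :
    (x ∈ upper r A ∨ x ∈ upper r B ∨ x ∈ upper r (A ∪ B)ᶜ) ∧
    (x ∈ lower r A ↔ x ∉ upper r B ∧ x ∉ upper r (A ∪ B)ᶜ) ∧
    (x ∈ lower r B ↔ x ∉ upper r A ∧ x ∉ upper r (A ∪ B)ᶜ) ∧
    (x ∈ lower r (A ∪ B)ᶜ ↔ x ∉ upper r A ∧ x ∉ upper r B) ∧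
    (x ∈ lower r Aᶜ ↔ x ∉ upper r A) ∧
    (x ∈ lower r Bᶜ ↔ x ∉ upper r B) ∧
    (x ∈ lower r (A ∪ B) ↔ x ∉ upper r (A ∪ B)ᶜ) := by
  have hd : ∀ y, y ∈ A → y ∈ B → False := fun y h1 h2 => by
    have : y ∈ A ∩ B := ⟨h1, h2⟩
    simp [hAB] at this
  have hx := hr.refl x
  simp only [lower, upper, cls, Set.Nonempty, Set.subset_def, Set.mem_ofPred_eq,
    Set.mem_inter_iff, Set.mem_compl_iff, Set.mem_union, not_exists]
  refine ⟨?_, ?_, ?_, ?_, ?_, ?_, ?_⟩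
  · by_cases hA : x ∈ A
    · exact Or.inl ⟨x, hx, hA⟩
    · by_cases hB : x ∈ B
      · exact Or.inr (Or.inl ⟨x, hx, hB⟩)
      · exact Or.inr (Or.inr ⟨x, hx, by tauto⟩)
  all_goals grind

/-- for disjoint `A, B ⊆ U`, the seven truth-value parts are
pairwise disjoint and their union is `U`. -/
theorem stmt_12 {α : Type*} (r : α → α → Prop) (hr : Equivalence r)
    (A B : Set α) (hAB : A ∩ B = ∅) :
    (∀ i j : Fin 7, i ≠ j → sevenParts r A B i ∩ sevenParts r A B j = ∅) ∧
    (⋃ i : Fin 7, sevenParts r A B i) = Set.univ := by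
  constructor
  · intro i j hij
    ext x
    obtain ⟨h0, h1, h2, h3, h4, h5, h6⟩ := parts_aux r hr A B hAB x
    fin_cases i <;> fin_cases j <;>
      simp [sevenParts, Tpart, sTpart, Unpart, Kpart, fKpart, sFpart, Fpart,
        -Set.compl_union, h1, h2, h3, h4, h5, h6] at hij ⊢ <;> clear h1 h2 h3 h4 h5 h6 <;> grind
  · ext x
    obtain ⟨h0, h1, h2, h3, h4, h5, h6⟩ := parts_aux r hr A B hAB x
    simp only [Set.mem_iUnion, Fin.exists_fin_succ, sevenParts, Set.mem_univ, iff_true]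
    simp [Fin.exists_fin_succ, Tpart, sTpart, Unpart, Kpart, fKpart, sFpart, Fpart,
        -Set.compl_union, h1, h2, h3, h4, h5, h6]
    clear h1 h2 h3 h4 h5 h6
    grind
end

section
/- For all disjoint A,B ⊆ U and all x ∈ U, membership in the seven truth-value parts is characterized by the three upper approximations R̄A, R̄B, R̄(U−A−B) as follows: x ∈ T(A,B) iff (x ∈ R̄A and x ∉ R̄B and x ∉ R̄(U−A−B)); x ∈ sT(A,B) iff (x ∈ R̄A and x ∉ R̄B and x ∈ R̄(U−A−B)); x ∈ Un(A,B) iff (x ∉ R̄A and x ∉ R̄B and x ∈ R̄(U−A−B)); x ∈ K(A,B) iff (x ∈ R̄A and x ∈ R̄B and x ∉ R̄(U−A−B)); x ∈ fK(A,B) iff (x ∈ R̄A and x ∈ R̄B and x ∈ R̄(U−A−B)); x ∈ sF(A,B) iff (x ∉ R̄A and x ∈ R̄B and x ∈ R̄(U−A−B)); x ∈ F(A,B) iff (x ∉ R̄A and x ∈ R̄B and x ∉ R̄(U−A−B)). -/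
open PBZ

/-- membership in the seven truth-value parts is characterized by
the three upper approximations `R̄A`, `R̄B`, `R̄(U−A−B)`. -/
theorem stmt_13 {α : Type*} (r : α → α → Prop) (hr : Equivalence r)
    (A B : Set α) (hAB : A ∩ B = ∅) :
    (∀ x, x ∈ Tpart r A B ↔
      x ∈ upper r A ∧ x ∉ upper r B ∧ x ∉ upper r (A ∪ B)ᶜ) ∧
    (∀ x, x ∈ sTpart r A B ↔
      x ∈ upper r A ∧ x ∉ upper r B ∧ x ∈ upper r (A ∪ B)ᶜ) ∧
    (∀ x, x ∈ Unpart r A B ↔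
      x ∉ upper r A ∧ x ∉ upper r B ∧ x ∈ upper r (A ∪ B)ᶜ) ∧
    (∀ x, x ∈ Kpart r A B ↔
      x ∈ upper r A ∧ x ∈ upper r B ∧ x ∉ upper r (A ∪ B)ᶜ) ∧
    (∀ x, x ∈ fKpart r A B ↔
      x ∈ upper r A ∧ x ∈ upper r B ∧ x ∈ upper r (A ∪ B)ᶜ) ∧
    (∀ x, x ∈ sFpart r A B ↔
      x ∉ upper r A ∧ x ∈ upper r B ∧ x ∈ upper r (A ∪ B)ᶜ) ∧
    (∀ x, x ∈ Fpart r A B ↔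
      x ∉ upper r A ∧ x ∈ upper r B ∧ x ∉ upper r (A ∪ B)ᶜ) := by
  have hlow : ∀ (X : Set α) (x : α), x ∈ lower r X ↔ x ∉ upper r Xᶜ := by
    intro X x
    constructor
    · rintro h ⟨y, hy, hyX⟩
      exact hyX (h hy)
    · intro h y hy
      by_contra hyX
      exact h ⟨y, hy, hyX⟩
  have hun : ∀ (X Y : Set α) (x : α),
      x ∈ upper r (X ∪ Y) ↔ x ∈ upper r X ∨ x ∈ upper r Y := by
    intro X Y x
    simp only [upper, Set.mem_setOf_eq, Set.inter_union_distrib_left, Set.union_nonempty]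
  have hd : ∀ y, y ∈ A → y ∉ B := by
    intro y h1 h2
    have : y ∈ A ∩ B := ⟨h1, h2⟩
    rw [hAB] at this
    exact this
  have hA : Aᶜ = B ∪ (A ∪ B)ᶜ := by
    ext y
    have := hd y
    simp only [Set.mem_compl_iff, Set.mem_union]
    tauto
  have hB : Bᶜ = A ∪ (A ∪ B)ᶜ := by
    ext y
    have := hd y
    simp only [Set.mem_compl_iff, Set.mem_union]
    tauto
  have hex : ∀ x, x ∈ upper r A ∨ x ∈ upper r B ∨ x ∈ upper r (A ∪ B)ᶜ := by
    intro x
    rw [← hun, ← hun]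
    refine ⟨x, hr.refl x, ?_⟩
    simp only [Set.mem_compl_iff, Set.mem_union]
    tauto
  have lA : ∀ x, x ∈ lower r A ↔ ¬ (x ∈ upper r B ∨ x ∈ upper r (A ∪ B)ᶜ) := by
    intro x
    rw [hlow, hA, hun]
  have lB : ∀ x, x ∈ lower r B ↔ ¬ (x ∈ upper r A ∨ x ∈ upper r (A ∪ B)ᶜ) := by
    intro x
    rw [hlow, hB, hun]
  have lAc : ∀ x, x ∈ lower r Aᶜ ↔ x ∉ upper r A := by
    intro x
    rw [hlow, compl_compl]
  have lBc : ∀ x, x ∈ lower r Bᶜ ↔ x ∉ upper r B := by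
    intro x
    rw [hlow, compl_compl]
  have lC : ∀ x, x ∈ lower r (A ∪ B)ᶜ ↔ ¬ (x ∈ upper r A ∨ x ∈ upper r B) := by
    intro x
    rw [hlow, compl_compl, hun]
  have lAB : ∀ x, x ∈ lower r (A ∪ B) ↔ x ∉ upper r (A ∪ B)ᶜ := hlow _
  refine ⟨?_, ?_, ?_, ?_, ?_, ?_, ?_⟩ <;> intro x <;> have := hex x <;>
    simp only [Tpart, sTpart, Unpart, Kpart, fKpart, sFpart, Fpart, Set.mem_inter_iff,
      lA, lB, lAc, lBc, lC, lAB] <;> tauto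
end

section
/- For all disjoint A,B ⊆ U, the 'at least contradictory' part satisfies K(A,B) ∪ sT(A,B) ∪ T(A,B) = {x ∈ U : ([x]_R ⊆ A∪B or [x]_R ⊆ U−B) and [x]_R ∩ A ≠ ∅} = (R̲(A∪B) ∪ R̲(U−B)) ∩ R̄A. -/
open PBZ

/-- `K(A,B) ∪ sT(A,B) ∪ T(A,B)
= {x : ([x]_R ⊆ A∪B or [x]_R ⊆ U−B) and [x]_R ∩ A ≠ ∅}
= (R̲(A∪B) ∪ R̲(U−B)) ∩ R̄A`. -/
theorem stmt_16 {α : Type*} (r : α → α → Prop) (hr : Equivalence r)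
    (A B : Set α) (hAB : A ∩ B = ∅) :
    Kpart r A B ∪ sTpart r A B ∪ Tpart r A B =
      {x | (cls r x ⊆ A ∪ B ∨ cls r x ⊆ Bᶜ) ∧ (cls r x ∩ A).Nonempty} ∧
    Kpart r A B ∪ sTpart r A B ∪ Tpart r A B =
      (lower r (A ∪ B) ∪ lower r Bᶜ) ∩ upper r A := by
  have key : Kpart r A B ∪ sTpart r A B ∪ Tpart r A B =
      {x | (cls r x ⊆ A ∪ B ∨ cls r x ⊆ Bᶜ) ∧ (cls r x ∩ A).Nonempty} := by
    ext x
    constructor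
    · rintro ((⟨⟨h1, h2⟩, _⟩ | ⟨⟨h1, h2⟩, _⟩) | h)
      · exact ⟨Or.inl h1, h2⟩
      · exact ⟨Or.inr h1, h2⟩
      · have h' : cls r x ⊆ A := h
        exact ⟨Or.inl fun y hy => Or.inl (h' hy), x, hr.refl x, h' (hr.refl x)⟩
    · rintro ⟨h, hA⟩
      by_cases hT : cls r x ⊆ A
      · exact Or.inr hT
      · left
        obtain ⟨y, hy, hyA⟩ := Set.not_subset.mp hT
        by_cases hB : (cls r x ∩ B).Nonempty
        · left
          rcases h with h | h
          · exact ⟨⟨h, hA⟩, hB⟩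
          · obtain ⟨z, hz, hzB⟩ := hB
            exact absurd hzB (h hz)
        · right
          have hB' : cls r x ⊆ Bᶜ := fun z hz hzB => hB ⟨z, hz, hzB⟩
          exact ⟨⟨hB', hA⟩, y, hy, fun hc => hc.elim hyA (hB' hy)⟩
  exact ⟨key, key⟩
end

section
/- For all disjoint A,B ⊆ U, the 'at least sometimes false' part satisfies sF(A,B) ∪ Un(A,B) ∪ K(A,B) ∪ fK(A,B) ∪ sT(A,B) ∪ T(A,B) = {x ∈ U : [x]_R ∩ (U−B) ≠ ∅} = R̄(U−B), which also equals U − R̲B. -/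
open PBZ

/-- `sF(A,B) ∪ Un(A,B) ∪ K(A,B) ∪ fK(A,B) ∪ sT(A,B) ∪ T(A,B)
= {x : [x]_R ∩ (U−B) ≠ ∅} = R̄(U−B) = U − R̲B`. -/
theorem stmt_18 {α : Type*} (r : α → α → Prop) (hr : Equivalence r)
    (A B : Set α) (hAB : A ∩ B = ∅) :
    sFpart r A B ∪ Unpart r A B ∪ Kpart r A B ∪ fKpart r A B ∪
        sTpart r A B ∪ Tpart r A B = {x | (cls r x ∩ Bᶜ).Nonempty} ∧
    sFpart r A B ∪ Unpart r A B ∪ Kpart r A B ∪ fKpart r A B ∪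
        sTpart r A B ∪ Tpart r A B = upper r Bᶜ ∧
    upper r Bᶜ = (lower r B)ᶜ := by
  have hd : ∀ y, y ∈ A → y ∉ B := fun y h1 h2 => by
    have : y ∈ A ∩ B := ⟨h1, h2⟩
    rw [hAB] at this
    exact this
  have key : sFpart r A B ∪ Unpart r A B ∪ Kpart r A B ∪ fKpart r A B ∪
        sTpart r A B ∪ Tpart r A B = upper r Bᶜ := by
    ext x
    have hx : r x x := hr.refl x
    have l1 : x ∈ lower r A ↔ x ∉ upper r B ∧ x ∉ upper r (A ∪ B)ᶜ := by
      simp only [lower, upper, cls, Set.Nonempty, Set.subset_def, Set.mem_ofPred_eq,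
        Set.mem_inter_iff, Set.mem_compl_iff, Set.mem_union]
      grind
    have l2 : x ∈ lower r Bᶜ ↔ x ∉ upper r B := by
      simp only [lower, upper, cls, Set.Nonempty, Set.subset_def, Set.mem_ofPred_eq,
        Set.mem_inter_iff, Set.mem_compl_iff]
      grind
    have l3 : x ∈ lower r Aᶜ ↔ x ∉ upper r A := by
      simp only [lower, upper, cls, Set.Nonempty, Set.subset_def, Set.mem_ofPred_eq,
        Set.mem_inter_iff, Set.mem_compl_iff]
      grind
    have l4 : x ∈ lower r (A ∪ B)ᶜ ↔ x ∉ upper r A ∧ x ∉ upper r B := by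
      simp only [lower, upper, cls, Set.Nonempty, Set.subset_def, Set.mem_ofPred_eq,
        Set.mem_inter_iff, Set.mem_compl_iff, Set.mem_union]
      grind
    have l5 : x ∈ lower r (A ∪ B) ↔ x ∉ upper r (A ∪ B)ᶜ := by
      simp only [lower, upper, cls, Set.Nonempty, Set.subset_def, Set.mem_ofPred_eq,
        Set.mem_inter_iff, Set.mem_compl_iff, Set.mem_union]
      grind
    have l6 : x ∈ upper r Bᶜ ↔ x ∈ upper r A ∨ x ∈ upper r (A ∪ B)ᶜ := by
      simp only [upper, cls, Set.Nonempty, Set.mem_ofPred_eq,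
        Set.mem_inter_iff, Set.mem_compl_iff, Set.mem_union]
      grind
    have l7 : x ∈ upper r A ∨ x ∈ upper r B ∨ x ∈ upper r (A ∪ B)ᶜ := by
      simp only [upper, cls, Set.Nonempty, Set.mem_ofPred_eq,
        Set.mem_inter_iff, Set.mem_compl_iff, Set.mem_union]
      grind
    simp only [sFpart, Unpart, Kpart, fKpart, sTpart, Tpart, Set.mem_union,
      Set.mem_inter_iff, l1, l2, l3, l4, l5, l6]
    clear l1 l2 l3 l4 l5 l6
    by_cases ha : x ∈ upper r A <;> by_cases hb : x ∈ upper r B <;>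
      by_cases hc : x ∈ upper r (A ∪ B)ᶜ <;> simp only [ha, hb, hc] at l7 ⊢ <;> simp at l7 ⊢
  refine ⟨key, key, ?_⟩
  ext x
  simp only [lower, upper, cls, Set.Nonempty, Set.subset_def, Set.mem_ofPred_eq,
    Set.mem_inter_iff, Set.mem_compl_iff]
  grind
end

section
/- For all disjoint A,B ⊆ U, the Belnap four truth-value operators obtained by aggregating the seven truth-value parts satisfy: T_Belnap(A,B) = T(A,B) ∪ sT(A,B) = R̄A ∩ R̲(U−B); U_Belnap(A,B) = Un(A,B) = R̲(U−A−B); K_Belnap(A,B) = K(A,B) ∪ fK(A,B) = R̄A ∩ R̄B; F_Belnap(A,B) = F(A,B) ∪ sF(A,B) = R̄B ∩ R̲(U−A); moreover these four sets are pairwise disjoint and their union is U. -/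
open PBZ

/-- The four Belnap truth-value operators obtained by aggregating the seven
truth-value parts, indexed by `Fin 4`. -/
def belnapParts {α : Type*} (r : α → α → Prop) (A B : Set α) : Fin 4 → Set α :=
  ![Tpart r A B ∪ sTpart r A B, Unpart r A B,
    Kpart r A B ∪ fKpart r A B, Fpart r A B ∪ sFpart r A B]

/-- the Belnap four truth-value operators satisfy
`T_Belnap = T ∪ sT = R̄A ∩ R̲(U−B)`, `U_Belnap = Un = R̲(U−A−B)`,
`K_Belnap = K ∪ fK = R̄A ∩ R̄B`, `F_Belnap = F ∪ sF = R̄B ∩ R̲(U−A)`;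
moreover the four sets are pairwise disjoint and their union is `U`. -/
theorem stmt_19 {α : Type*} (r : α → α → Prop) (hr : Equivalence r)
    (A B : Set α) (hAB : A ∩ B = ∅) :
    Tpart r A B ∪ sTpart r A B = upper r A ∩ lower r Bᶜ ∧
    Unpart r A B = lower r (A ∪ B)ᶜ ∧
    Kpart r A B ∪ fKpart r A B = upper r A ∩ upper r B ∧
    Fpart r A B ∪ sFpart r A B = upper r B ∩ lower r Aᶜ ∧
    (∀ i j : Fin 4, i ≠ j → belnapParts r A B i ∩ belnapParts r A B j = ∅) ∧
    (⋃ i : Fin 4, belnapParts r A B i) = Set.univ := by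
  have hd : ∀ y, y ∈ A → y ∈ B → False := fun y h1 h2 => by
    have : y ∈ A ∩ B := ⟨h1, h2⟩
    rw [hAB] at this
    exact this
  have lowc : ∀ (X : Set α) x, x ∈ lower r Xᶜ ↔ ¬ x ∈ upper r X := fun X x =>
    ⟨fun h ⟨y, h1, h2⟩ => h h1 h2, fun h y h1 h2 => h ⟨y, h1, h2⟩⟩
  have low : ∀ (X : Set α) x, x ∈ lower r X ↔ ¬ x ∈ upper r Xᶜ := fun X x => by
    rw [← lowc, compl_compl]
  have upU : ∀ (X Y : Set α) x, x ∈ upper r (X ∪ Y) ↔ x ∈ upper r X ∨ x ∈ upper r Y :=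
    fun X Y x => by
      simp only [upper, Set.mem_ofPred_eq, Set.inter_union_distrib_left, Set.union_nonempty]
  have hA : Aᶜ = B ∪ (A ∪ B)ᶜ := by
    ext y
    have := hd y
    simp only [Set.mem_compl_iff, Set.mem_union]
    tauto
  have hB : Bᶜ = A ∪ (A ∪ B)ᶜ := by
    ext y
    have := hd y
    simp only [Set.mem_compl_iff, Set.mem_union]
    tauto
  have lA : ∀ x, x ∈ lower r A ↔ ¬ (x ∈ upper r B ∨ x ∈ upper r (A ∪ B)ᶜ) := fun x => by
    rw [low, ← upU, ← hA]
  have lB : ∀ x, x ∈ lower r B ↔ ¬ (x ∈ upper r A ∨ x ∈ upper r (A ∪ B)ᶜ) := fun x => by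
    rw [low, ← upU, ← hB]
  have tot : ∀ x, x ∈ upper r A ∨ x ∈ upper r B ∨ x ∈ upper r (A ∪ B)ᶜ := fun x => by
    rw [← upU, ← hA, ← upU, Set.union_compl_self]
    exact ⟨x, hr.refl x, trivial⟩
  have e1 : Tpart r A B ∪ sTpart r A B = upper r A ∩ lower r Bᶜ := by
    ext x
    have := tot x
    simp only [Tpart, sTpart, Set.mem_union, Set.mem_inter_iff, lA, lowc]
    tauto
  have e3 : Kpart r A B ∪ fKpart r A B = upper r A ∩ upper r B := by
    ext x
    simp only [Kpart, fKpart, Set.mem_union, Set.mem_inter_iff, low (A ∪ B)]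
    tauto
  have e4 : Fpart r A B ∪ sFpart r A B = upper r B ∩ lower r Aᶜ := by
    ext x
    have := tot x
    simp only [Fpart, sFpart, Set.mem_union, Set.mem_inter_iff, lB, lowc]
    tauto
  refine ⟨e1, rfl, e3, e4, ?_, ?_⟩
  · intro i j hij
    ext x
    unfold belnapParts
    rw [e1, e3, e4]
    fin_cases i <;> fin_cases j <;>
      first
      | exact absurd rfl hij
      | (simp [Unpart, lowc, upU, -Set.compl_union]; try tauto)
  · ext x
    unfold belnapParts
    rw [e1, e3, e4]
    simp only [Set.mem_iUnion, Fin.exists_fin_succ, Set.mem_univ, iff_true]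
    simp [Unpart, lowc, upU, -Set.compl_union]
    tauto
end
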